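/- arXiv:2003.14191 — 2 statements merged into one kernel-verified Lean document; each statement's English description precedes it below -/
import Mathlib

section
/- Let $\rho : \mathbb{R}^3 \to [0,\infty)$ be integrable, bounded, and radial, i.e. $\rho(Rx) = \rho(x)$ for every $R \in SO(3)$ and $x \in \mathbb{R}^3$. Then for every $x \ne 0$, $\frac{1}{4\pi}\int_{\mathbb{R}^3} \frac{(x-y)\,\rho(y)}{|x-y|^3}\,dy = \frac{x}{4\pi |x|^3} \int_{|y| \le |x|} \rho(y)\,dy$. In particular this vector field is at each $x \ne 0$ a nonnegative multiple of $x/|x|$, and its Euclidean norm is at most $\frac{1}{4\pi |x|^2} \int_{\mathbb{R}^3} \rho(y)\,dy$. -/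
open MeasureTheory Real Set
noncomputable section

abbrev E3 := EuclideanSpace ℝ (Fin 3)

def coordMap (p : ℝ × ℝ × ℝ) : E3 := WithLp.toLp 2 ![p.1, p.2.1, p.2.2]

lemma coordMap_mp : MeasurePreserving coordMap volume volume := by
  have h1 := PiLp.volume_preserving_toLp (Fin 3)
  have h2 := (volume_preserving_piFinSuccAbove (fun _ : Fin 3 => ℝ) 0).symm
  have h3 := (MeasurePreserving.id (volume : Measure ℝ)).prod (volume_preserving_finTwoArrow ℝ).symm
  have := (h1.comp h2).comp h3
  convert! this using 1
  ext p i
  fin_cases i <;> simp [coordMap, MeasurableEquiv.piFinSuccAbove, MeasurableEquiv.finTwoArrow]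

lemma lint_sin (G : ℝ → ENNReal) :
    ∫⁻ φ in Ioo (-π) π, ENNReal.ofReal (sin φ) * G (cos φ) = ∫⁻ u in Icc (-1 : ℝ) 1, G u := by
  have hu : Ioo (-π) π = Ioc (-π) 0 ∪ Ioo 0 π := (Ioc_union_Ioo_eq_Ioo (by linarith [pi_pos]) pi_pos).symm
  rw [hu, lintegral_union measurableSet_Ioo (by
    rw [Set.disjoint_left]; intro t h1 h2; exact absurd h1.2 (not_le.2 h2.1))]
  have h0 : ∫⁻ φ in Ioc (-π) 0, ENNReal.ofReal (sin φ) * G (cos φ) = 0 := by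
    rw [setLIntegral_congr_fun (g := fun _ => 0) measurableSet_Ioc]
    · simp
    · intro t ht
      simp [ENNReal.ofReal_of_nonpos (sin_nonpos_of_nonpos_of_neg_pi_le ht.2 ht.1.le)]
  rw [h0, zero_add, setLIntegral_congr Ioo_ae_eq_Icc, ← bijOn_cos.image_eq,
    lintegral_image_eq_lintegral_abs_deriv_mul measurableSet_Icc
      (fun x _ => (hasDerivAt_cos x).hasDerivWithinAt) injOn_cos]
  refine setLIntegral_congr_fun measurableSet_Icc fun t ht => ?_
  simp only [abs_neg, abs_of_nonneg (sin_nonneg_of_mem_Icc ht)]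

lemma lint_polar (f : ℝ × ℝ → ENNReal) (hf : Measurable f) :
    ∫⁻ p, f p = ∫⁻ r in Ioi (0:ℝ), ∫⁻ θ in Ioo (-π) π,
      ENNReal.ofReal r * f (r * cos θ, r * sin θ) := by
  rw [← lintegral_comp_polarCoord_symm]
  have : polarCoord.target = Ioi (0 : ℝ) ×ˢ Ioo (-π) π := rfl
  rw [this, Measure.volume_eq_prod, ← Measure.prod_restrict, lintegral_prod]
  · rfl
  · apply Measurable.aemeasurable
    have : Measurable polarCoord.symm := continuous_polarCoord_symm.measurable
    simp only [smul_eq_mul]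
    fun_prop

def nu : Measure ℝ := (volume.restrict (Ioi 0)).withDensity (fun r => ENNReal.ofReal (2 * π * r^2))

def mm : Measure (ℝ × ℝ) := nu.prod (volume.restrict (Icc (-1) 1))

instance : SFinite nu := by unfold nu; infer_instance

lemma lint_T (F : ℝ × ℝ → ENNReal) (hF : Measurable F) :
    ∫⁻ y : E3, F (‖y‖, y 0 / ‖y‖) = ∫⁻ p, F p ∂mm := by
  have hnorm : ∀ p, ‖coordMap p‖ = √(p.1^2 + (p.2.1^2 + p.2.2^2)) := by
    intro p
    simp [EuclideanSpace.norm_eq, coordMap, Fin.sum_univ_three, add_assoc]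
  set h : ℝ → ℝ → ENNReal := fun z s => F (√(z^2 + s^2), z / √(z^2+s^2)) with hh
  have hmeas : Measurable (Function.uncurry h) := by
    simp only [hh, Function.uncurry_def]; fun_prop
  have hf : Measurable (fun y : E3 => F (‖y‖, y 0 / ‖y‖)) := by fun_prop
  calc ∫⁻ y : E3, F (‖y‖, y 0 / ‖y‖)
      = ∫⁻ p : ℝ × ℝ × ℝ, h p.1 (√(p.2.1^2 + p.2.2^2)) := by
        rw [← coordMap_mp.lintegral_comp hf]
        refine lintegral_congr fun p => ?_
        simp only [hh, hnorm]
        rw [Real.sq_sqrt (by positivity)]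
        simp [coordMap]
    _ = ∫⁻ z, ∫⁻ q : ℝ × ℝ, h z (√(q.1^2 + q.2^2)) := by
        rw [Measure.volume_eq_prod, lintegral_prod]
        apply Measurable.aemeasurable
        simp only [hh]; fun_prop
    _ = ∫⁻ z, ∫⁻ s, ENNReal.ofReal (2 * π * s) * h z s := by
        refine lintegral_congr fun z => ?_
        rw [lint_polar _ (by simp only [hh]; fun_prop)]
        rw [← lintegral_indicator measurableSet_Ioi]
        refine lintegral_congr fun s => ?_
        by_cases hs : 0 < s
        · rw [indicator_of_mem (by exact hs)]
          have : ∀ θ : ℝ, √((s * cos θ)^2 + (s * sin θ)^2) = s := by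
            intro θ
            rw [show (s * cos θ)^2 + (s * sin θ)^2 = s^2 * (sin θ^2 + cos θ^2) by ring,
              sin_sq_add_cos_sq, mul_one, sqrt_sq hs.le]
          simp only [this]
          rw [setLIntegral_const, Real.volume_Ioo, mul_right_comm, ← ENNReal.ofReal_mul hs.le]
          congr 2; ring
        · rw [indicator_of_notMem (by exact hs), ENNReal.ofReal_of_nonpos, zero_mul]
          have := pi_pos; nlinarith
    _ = ∫⁻ p : ℝ × ℝ, ENNReal.ofReal (2 * π * p.2) * h p.1 p.2 := by
        rw [Measure.volume_eq_prod, lintegral_prod]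
        apply Measurable.aemeasurable
        simp only [hh]; fun_prop
    _ = ∫⁻ r in Ioi (0:ℝ), ∫⁻ θ in Ioo (-π) π,
          ENNReal.ofReal (2 * π * r^2) * (ENNReal.ofReal (sin θ) * F (r, cos θ)) := by
        rw [lint_polar _ (by simp only [hh]; fun_prop)]
        refine setLIntegral_congr_fun measurableSet_Ioi fun r hr => ?_
        have hr : 0 < r := hr
        refine lintegral_congr fun θ => ?_
        have : √((r * cos θ)^2 + (r * sin θ)^2) = r := by
          rw [show (r * cos θ)^2 + (r * sin θ)^2 = r^2 * (sin θ^2 + cos θ^2) by ring,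
              sin_sq_add_cos_sq, mul_one, sqrt_sq hr.le]
        simp only [hh, this]
        rw [← mul_assoc, ← mul_assoc (ENNReal.ofReal (2 * π * r^2)), ← ENNReal.ofReal_mul hr.le,
          ← ENNReal.ofReal_mul (show 0 ≤ 2 * π * r^2 by positivity), mul_div_cancel_left₀ _ hr.ne']
        congr 2; ring
    _ = ∫⁻ r in Ioi (0:ℝ), ENNReal.ofReal (2 * π * r^2) * ∫⁻ u in Icc (-1:ℝ) 1, F (r, u) := by
        refine lintegral_congr fun r => ?_
        rw [lintegral_const_mul _ (by fun_prop), lint_sin (fun u => F (r, u))]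
    _ = ∫⁻ p, F p ∂mm := by
        rw [mm, lintegral_prod _ hF.aemeasurable, nu, lintegral_withDensity_eq_lintegral_mul]
        · rfl
        · fun_prop
        · exact hF.lintegral_prod_right'

lemma T_mp : MeasurePreserving (fun y : E3 => (‖y‖, y 0 / ‖y‖)) volume mm := by
  have hm : Measurable (fun y : E3 => (‖y‖, y 0 / ‖y‖)) := by fun_prop
  refine ⟨hm, ?_⟩
  ext s hs
  rw [← lintegral_indicator_one hs, ← lintegral_indicator_one hs,
    lintegral_map (measurable_one.indicator hs) hm, lint_T _ (measurable_one.indicator hs)]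

lemma exists_rot {x y : E3} (h : ‖x‖ = ‖y‖) :
    ∃ R : E3 ≃ₗᵢ[ℝ] E3, R.toLinearEquiv.det = 1 ∧ R x = y := by
  by_cases hxy : x = y
  · exact ⟨LinearIsometryEquiv.refl ℝ E3, by simp, by simp [hxy]⟩
  have hw : ∃ w : E3, w ≠ 0 ∧ inner ℝ w x = 0 := by
    have : (ℝ ∙ x)ᗮ ≠ ⊥ := by
      intro hb
      have h1 := (ℝ ∙ x).finrank_add_finrank_orthogonal
      rw [hb] at h1
      have h2 := finrank_span_le_card (R := ℝ) ({x} : Set E3)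
      simp at h1 h2
      omega
    obtain ⟨w, hw, h0⟩ := Submodule.exists_mem_ne_zero_of_ne_bot this
    exact ⟨w, h0, by rw [real_inner_comm]; exact Submodule.mem_orthogonal_singleton_iff_inner_right.1 hw⟩
  obtain ⟨w, hw0, hw⟩ := hw
  refine ⟨((ℝ ∙ w)ᗮ).reflection.trans ((ℝ ∙ (x - y))ᗮ).reflection, ?_, ?_⟩
  · have d : ∀ v : E3, v ≠ 0 → ((ℝ ∙ v)ᗮ).reflection.toLinearEquiv.det = -1 := by
      intro v hv
      rw [Submodule.linearEquiv_det_reflection, Submodule.orthogonal_orthogonal, finrank_span_singleton hv]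
      simp
    have := d w hw0
    have := d (x - y) (sub_ne_zero.2 hxy)
    rw [LinearIsometryEquiv.toLinearEquiv_trans, LinearEquiv.det_trans]
    simp [*]
  · rw [LinearIsometryEquiv.trans_apply, Submodule.reflection_mem_subspace_eq_self (K := (ℝ ∙ w)ᗮ)
      (Submodule.mem_orthogonal_singleton_iff_inner_right.2 hw), Submodule.reflection_sub h]

lemma T_mp' (e : E3) (he : ‖e‖ = 1) :
    MeasurePreserving (fun y : E3 => (‖y‖, inner ℝ e y / ‖y‖)) volume mm := by
  obtain ⟨R, -, hR⟩ := exists_rot (x := e) (y := EuclideanSpace.single 0 1) (by simp [he])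
  convert! T_mp.comp R.measurePreserving using 1
  ext y
  · simp
  · have : inner ℝ e y = (R y) 0 := by
      rw [← R.inner_map_map, hR]; simp [EuclideanSpace.inner_single_left]
    simp [this]

def kk (a : ℝ) (p : ℝ × ℝ) : ℝ := (a^2 - a * p.1 * p.2) / (√(a^2 + p.1^2 - 2 * a * p.1 * p.2))^3

lemma int_kk {a r : ℝ} (ha : 0 < a) (hr : 0 < r) (hne : r ≠ a) :
    ∫ u in Icc (-1:ℝ) 1, kk a (r, u) = a⁻¹ * (2 * if r ≤ a then 1 else 0) := by
  rw [integral_Icc_eq_integral_Ioc, ← intervalIntegral.integral_of_le (by norm_num)]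
  have hD : ∀ u ∈ uIcc (-1:ℝ) 1, 0 < a^2 + r^2 - 2 * a * r * u := by
    intro u hu
    rw [uIcc_of_le (by norm_num)] at hu
    have : 0 < (r - a)^2 := by have := sub_ne_zero.2 hne; positivity
    nlinarith [mul_nonneg (mul_pos ha hr).le (sub_nonneg.2 hu.2)]
  rw [intervalIntegral.integral_eq_sub_of_hasDerivAt
    (f := fun u => (u - r / a) / √(a^2 + r^2 - 2 * a * r * u))]
  · have h2 : √(a^2 + r^2 - 2 * a * r * (-1)) = a + r := by
      rw [show a^2 + r^2 - 2 * a * r * (-1) = (a+r)^2 by ring, sqrt_sq (by positivity)]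
    have h1 : √(a^2 + r^2 - 2 * a * r * 1) = |a - r| := by
      rw [show a^2 + r^2 - 2 * a * r * 1 = (a-r)^2 by ring, sqrt_sq_eq_abs]
    simp only [h1, h2]
    rcases lt_or_gt_of_ne hne with h | h
    · have : a - r ≠ 0 := by linarith
      rw [abs_of_pos (by linarith), if_pos h.le]
      field_simp
      ring
    · have : r - a ≠ 0 := by linarith
      rw [abs_of_neg (by linarith), if_neg (by linarith), neg_sub]
      field_simp
      ring
  · intro u hu
    have hd := hD u hu
    have h1 : HasDerivAt (fun u => a^2 + r^2 - 2 * a * r * u) (-(2 * a * r)) u := by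
      simpa using ((hasDerivAt_id u).const_mul (2 * a * r)).const_sub (a^2 + r^2)
    have h2 := ((hasDerivAt_id u).sub_const (r/a)).div (h1.sqrt hd.ne') (sqrt_pos.2 hd).ne'
    convert! h2 using 1
    have hs := Real.sq_sqrt hd.le
    have hp := sqrt_pos.2 hd
    simp only [kk, id]
    set S := √(a^2 + r^2 - 2 * a * r * u)
    field_simp
    rw [hs]
    ring
  · apply ContinuousOn.intervalIntegrable
    intro u hu
    have hd := hD u hu
    have hp := (sqrt_pos.2 hd).ne'
    apply ContinuousAt.continuousWithinAt
    unfold kk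
    apply ContinuousAt.div (by fun_prop) (by fun_prop)
    positivity

lemma integrable_field (ρ : E3 → ℝ) (h0 : ∀ x, 0 ≤ ρ x) (hi : Integrable ρ volume)
    (A : ℝ) (hA : ∀ x, ρ x ≤ A) (x : E3) :
    Integrable (fun y => (ρ y / ‖x - y‖ ^ 3) • (x - y)) volume := by
  have hb : Integrable (fun y : E3 => (Metric.ball (0:E3) 1).indicator (fun y => (‖y‖^2)⁻¹) y) volume := by
    rw [integrable_indicator_iff measurableSet_ball]
    rw [integrableOn_fun_norm_addHaar volume (f := fun t : ℝ => (t^2)⁻¹)]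
    have : IntegrableOn (fun _ : ℝ => (1:ℝ)) (Ioo 0 1) volume := by simp
    refine this.congr_fun (fun t ht => ?_) measurableSet_Ioo
    have := ht.1.ne'
    simp [this]
  have hb2 := (hb.comp_sub_left x).const_mul A
  refine (hi.add hb2).mono' ?_ ?_
  · refine AEStronglyMeasurable.smul (f := fun y => ρ y / ‖x - y‖ ^ 3) (g := fun y => x - y) ?_ ?_
    · simp only [div_eq_mul_inv]
      refine hi.1.mul (g := fun y => (‖x - y‖ ^ 3)⁻¹) ?_
      apply Measurable.aestronglyMeasurable
      fun_prop
    · fun_prop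
  · refine Filter.Eventually.of_forall fun y => ?_
    have hA0 : 0 ≤ A := (h0 0).trans (hA 0)
    rw [norm_smul, norm_div, norm_pow, norm_norm, norm_of_nonneg (h0 y)]
    simp only [Pi.add_apply]
    by_cases hxy : ‖x - y‖ = 0
    · rw [hxy]; simp only [mul_zero]
      have : 0 ≤ (Metric.ball (0:E3) 1).indicator (fun y => (‖y‖^2)⁻¹) (x - y) :=
        indicator_nonneg (fun _ _ => by positivity) _
      have := h0 y
      positivity
    have he : ρ y / ‖x - y‖^3 * ‖x - y‖ = ρ y * (‖x - y‖^2)⁻¹ := by field_simp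
    rw [he]
    by_cases hm : x - y ∈ Metric.ball (0:E3) 1
    · rw [indicator_of_mem hm]
      have : ρ y * (‖x - y‖^2)⁻¹ ≤ A * (‖x - y‖^2)⁻¹ := by gcongr; exact hA y
      linarith [h0 y]
    · rw [indicator_of_notMem hm]
      simp only [mem_ball_zero_iff, not_lt] at hm
      have : (‖x - y‖^2)⁻¹ ≤ 1 := inv_le_one_of_one_le₀ (one_le_pow₀ hm)
      nlinarith [h0 y]

lemma main_scalar (g : ℝ → ℝ) (hg : Integrable (fun y : E3 => g ‖y‖) volume) {a : ℝ} (ha : 0 < a)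
    (e : E3) (he : ‖e‖ = 1)
    (hi : Integrable (fun y : E3 => g ‖y‖ * kk a (‖y‖, inner ℝ e y / ‖y‖)) volume) :
    ∫ y : E3, g ‖y‖ * kk a (‖y‖, inner ℝ e y / ‖y‖) = a⁻¹ * ∫ y in {y : E3 | ‖y‖ ≤ a}, g ‖y‖ := by
  have hT := T_mp' e he
  have hgm : AEStronglyMeasurable g nu := by
    have h1 := ((integrable_fun_norm_addHaar (volume : Measure E3)).1 hg).1
    have h2 : AEStronglyMeasurable g (volume.restrict (Ioi 0)) := by
      have h3 : AEStronglyMeasurable (fun r : ℝ => (r^2)⁻¹) (volume.restrict (Ioi 0)) := by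
        apply Measurable.aestronglyMeasurable; fun_prop
      refine (h3.mul h1).congr ?_
      filter_upwards [ae_restrict_mem measurableSet_Ioi] with r hr
      have : r ≠ 0 := (mem_Ioi.1 hr).ne'
      simp [this]
    exact h2.mono_ac (withDensity_absolutelyContinuous _ _)
  have hgm2 : AEStronglyMeasurable (fun p : ℝ × ℝ => g p.1) mm := hgm.comp_fst
  have hk : AEStronglyMeasurable (kk a) mm := by
    apply Measurable.aestronglyMeasurable; unfold kk; fun_prop
  have hf1 : AEStronglyMeasurable (fun p : ℝ × ℝ => g p.1 * kk a p) mm := hgm2.mul hk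
  have hf2 : AEStronglyMeasurable (fun p : ℝ × ℝ => (Iic a).indicator g p.1) mm :=
    (hgm.indicator measurableSet_Iic).comp_fst
  have hms : MeasurableSet {y : E3 | ‖y‖ ≤ a} := measurableSet_le measurable_norm measurable_const
  have hind : ∀ y : E3, {y : E3 | ‖y‖ ≤ a}.indicator (fun y => g ‖y‖) y = (Iic a).indicator g ‖y‖ := by
    intro y; simp [indicator]
  have e1 : ∫ y : E3, g ‖y‖ * kk a (‖y‖, inner ℝ e y / ‖y‖) = ∫ p, g p.1 * kk a p ∂mm := by
    rw [← hT.map_eq, integral_map hT.measurable.aemeasurable (by rwa [hT.map_eq])]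
  have e2 : ∫ y in {y : E3 | ‖y‖ ≤ a}, g ‖y‖ = ∫ p, (Iic a).indicator g p.1 ∂mm := by
    rw [← integral_indicator hms, ← hT.map_eq,
      integral_map hT.measurable.aemeasurable (by rwa [hT.map_eq])]
    exact integral_congr_ae (Filter.Eventually.of_forall hind)
  have i1 : Integrable (fun p : ℝ × ℝ => g p.1 * kk a p) mm :=
    (hT.integrable_comp hf1).1 hi
  rw [e1, e2]
  rw [mm, integral_prod _ i1, integral_fun_fst, smul_eq_mul, ← integral_const_mul, ← integral_const_mul]
  have hae : ∀ᵐ r ∂nu, 0 < r ∧ r ≠ a := by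
    refine (withDensity_absolutelyContinuous _ _) ?_
    have h2 : ∀ᵐ r ∂(volume.restrict (Ioi (0:ℝ))), r ≠ a :=
      ae_restrict_of_ae (Measure.ae_ne volume a)
    filter_upwards [ae_restrict_mem measurableSet_Ioi, h2] with r hr h2 using ⟨hr, h2⟩
  refine integral_congr_ae ?_
  filter_upwards [hae] with r hr
  rw [integral_const_mul, int_kk ha hr.1 hr.2]
  simp only [indicator, mem_Iic, Measure.real, Measure.restrict_apply_univ, Real.volume_Icc]
  split_ifs
  · norm_num; ring
  · simp

/-- For a nonnegative, bounded, integrable, radial density `ρ` on `ℝ³`, the Newtonian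
field `(4π)⁻¹ ∫ (x-y) ρ(y)/|x-y|³ dy` equals `x/(4π|x|³)` times the mass in the ball of
radius `|x|`; in particular at each `x ≠ 0` it is a nonnegative multiple of `x/|x|` and
its norm is at most `(4π|x|²)⁻¹ ∫ ρ`. -/
theorem radial_field_formula
    (ρ : E3 → ℝ) (hρ_nonneg : ∀ x, 0 ≤ ρ x) (hρ_int : Integrable ρ volume)
    (hρ_bdd : ∃ A : ℝ, ∀ x, ρ x ≤ A)
    (hρ_radial : ∀ R : E3 ≃ₗᵢ[ℝ] E3, R.toLinearEquiv.det = 1 → ∀ x, ρ (R x) = ρ x) :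
    ∀ x : E3, x ≠ 0 →
      ((4 * Real.pi)⁻¹ • ∫ y, (ρ y / ‖x - y‖ ^ 3) • (x - y)) =
        ((4 * Real.pi * ‖x‖ ^ 3)⁻¹ * ∫ y in {y : E3 | ‖y‖ ≤ ‖x‖}, ρ y) • x ∧
      (∃ c : ℝ, 0 ≤ c ∧
        ((4 * Real.pi)⁻¹ • ∫ y, (ρ y / ‖x - y‖ ^ 3) • (x - y)) = c • (‖x‖⁻¹ • x)) ∧
      ‖(4 * Real.pi)⁻¹ • ∫ y, (ρ y / ‖x - y‖ ^ 3) • (x - y)‖ ≤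
        (4 * Real.pi * ‖x‖ ^ 2)⁻¹ * ∫ y, ρ y := by
  intro x hx
  obtain ⟨A, hA⟩ := hρ_bdd
  have hinv : ∀ y z : E3, ‖y‖ = ‖z‖ → ρ y = ρ z := by
    intro y z h
    obtain ⟨R, hR, rfl⟩ := exists_rot h
    exact (hρ_radial R hR y).symm
  have hI := integrable_field ρ hρ_nonneg hρ_int A hA x
  have ha : 0 < ‖x‖ := norm_pos_iff.2 hx
  have ha' := ha.ne'
  set g : ℝ → ℝ := fun r => ρ (EuclideanSpace.single 0 r) with hg
  have hρg : ρ = fun y => g ‖y‖ := by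
    ext y; exact hinv _ _ (by simp)
  have hM : 0 ≤ ∫ y in {y : E3 | ‖y‖ ≤ ‖x‖}, ρ y :=
    integral_nonneg hρ_nonneg
  have hM2 : ∫ y in {y : E3 | ‖y‖ ≤ ‖x‖}, ρ y ≤ ∫ y, ρ y :=
    setIntegral_le_integral hρ_int (Filter.Eventually.of_forall hρ_nonneg)
  have key : ∫ y, (ρ y / ‖x - y‖ ^ 3) • (x - y) =
      ((‖x‖ ^ 3)⁻¹ * ∫ y in {y : E3 | ‖y‖ ≤ ‖x‖}, ρ y) • x := by
    set V := ∫ y, (ρ y / ‖x - y‖ ^ 3) • (x - y) with hV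
    have hmem : V ∈ (ℝ ∙ x) := by
      rw [← Submodule.reflection_eq_self_iff]
      set R := (ℝ ∙ x).reflection with hR
      have hRx : R x = x := Submodule.reflection_mem_subspace_eq_self (Submodule.mem_span_singleton_self x)
      have h1 : R V = ∫ y, R ((ρ y / ‖x - y‖ ^ 3) • (x - y)) :=
        (R.toContinuousLinearEquiv.integral_comp_comm _).symm
      rw [h1, hV, ← R.measurePreserving.integral_comp R.toHomeomorph.measurableEmbedding
        (fun y => (ρ y / ‖x - y‖ ^ 3) • (x - y))]
      refine integral_congr_ae (Filter.Eventually.of_forall fun y => ?_)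
      have h2 : ‖x - R y‖ = ‖x - y‖ := by
        conv_lhs => rw [← hRx]
        rw [← map_sub, R.norm_map]
      have h3 : ρ (R y) = ρ y := hinv _ _ (R.norm_map y)
      simp only [h2, h3, map_smul, map_sub, hRx]
    obtain ⟨c, hc⟩ := Submodule.mem_span_singleton.1 hmem
    have hk : ∀ y : E3, inner ℝ x ((ρ y / ‖x - y‖ ^ 3) • (x - y)) =
        g ‖y‖ * kk ‖x‖ (‖y‖, inner ℝ (‖x‖⁻¹ • x) y / ‖y‖) := by
      intro y
      have hp : ‖x‖ * ‖y‖ * (inner ℝ (‖x‖⁻¹ • x) y / ‖y‖) = inner ℝ x y := by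
        rw [real_inner_smul_left]
        by_cases hy : y = 0
        · simp [hy]
        have : ‖y‖ ≠ 0 := norm_ne_zero_iff.2 hy
        field_simp
      have hn : √(‖x‖^2 + ‖y‖^2 - 2 * inner ℝ x y) = ‖x - y‖ := by
        rw [show ‖x‖^2 + ‖y‖^2 - 2 * inner ℝ x y = ‖x - y‖^2 by rw [norm_sub_sq_real]; ring]
        exact sqrt_sq (norm_nonneg _)
      unfold kk
      dsimp only
      rw [mul_assoc 2 ‖x‖, mul_assoc 2 (‖x‖ * ‖y‖), hp, hn, real_inner_smul_right, inner_sub_right,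
        real_inner_self_eq_norm_sq, show ρ y = g ‖y‖ from congrFun hρg y]
      ring
    have hs : inner ℝ x V = ‖x‖⁻¹ * ∫ y in {y : E3 | ‖y‖ ≤ ‖x‖}, ρ y := by
      rw [hV, ← integral_inner hI x]
      simp only [hk]
      rw [main_scalar g (by rw [← hρg]; exact hρ_int) ha (‖x‖⁻¹ • x)
        (by rw [norm_smul, norm_inv, norm_norm, inv_mul_cancel₀ ha'])]
      · rw [← hρg]
      · have := hI.const_inner (𝕜 := ℝ) x
        simpa only [hk] using this
    rw [← hc, real_inner_smul_right, real_inner_self_eq_norm_sq] at hs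
    rw [← hc]
    congr 1
    field_simp at hs ⊢
    linarith
  have hfin : ((4 * Real.pi)⁻¹ • ∫ y, (ρ y / ‖x - y‖ ^ 3) • (x - y)) =
        ((4 * Real.pi * ‖x‖ ^ 3)⁻¹ * ∫ y in {y : E3 | ‖y‖ ≤ ‖x‖}, ρ y) • x := by
    rw [key, smul_smul, mul_inv (4 * π), mul_assoc]
  refine ⟨hfin, ⟨(4 * Real.pi * ‖x‖ ^ 2)⁻¹ * ∫ y in {y : E3 | ‖y‖ ≤ ‖x‖}, ρ y, by positivity, ?_⟩, ?_⟩
  · rw [hfin, smul_smul]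
    congr 1
    field_simp
  · rw [hfin, norm_smul, norm_of_nonneg (by positivity)]
    calc _ = (4 * Real.pi * ‖x‖ ^ 2)⁻¹ * ∫ y in {y : E3 | ‖y‖ ≤ ‖x‖}, ρ y := by field_simp
      _ ≤ _ := by gcongr
end
end

section
/- Let $\delta \in (0, 10^{-10})$, let $n \ge 7$, and let $D > 0$. There exists a constant $C$ (depending only on $\delta$, $n$, $D$) such that: for every measurable $f : \mathbb{R}^3 \times \mathbb{R}^3 \to [0,\infty)$ with $f \le D$ almost everywhere and $\iint (1+|v|) f(x,v)\,dx\,dv \le D$, setting $\rho(x) := \int_{\mathbb{R}^3} f(x,v)\,dv$ and $M := \iint (1+|v|)^n f(x,v)\,dx\,dv$ (assumed finite), one has for every $x \in \mathbb{R}^3$: $\Big|\int_{\mathbb{R}^3} \frac{\rho(y)\,(y-x)}{|x-y|^3}\,dy\Big| \le C \big( 1 + M^{(5+\delta)/((3-\delta)(n-1))} \big)$. -/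
open MeasureTheory Real Set
noncomputable section

def kerR (R : ℝ) (r : ℝ) : ℝ := (Iic R).indicator (fun r => (r ^ 2)⁻¹) r

lemma kerR_nonneg (R r : ℝ) : 0 ≤ kerR R r := by
  unfold kerR
  apply indicator_nonneg
  intro x _
  positivity

lemma kerR_int : ∃ c : ℝ, 0 ≤ c ∧ ∀ R : ℝ, 0 ≤ R →
    ∫⁻ y : E3, ENNReal.ofReal (kerR R ‖y‖) ≤ ENNReal.ofReal (c * R) := by
  refine ⟨3 * (volume : Measure E3).real (Metric.ball 0 1), by positivity, fun R hR => ?_⟩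
  have key : EqOn (fun y : ℝ => y ^ (Module.finrank ℝ E3 - 1) • kerR R y)
      ((Ioc 0 R).indicator (fun _ => (1:ℝ))) (Ioi 0) := by
    intro y hy
    have hy' : (0:ℝ) < y := hy
    by_cases h : y ≤ R
    · simp [kerR, h, hy']
      field_simp
    · simp [kerR, h]
  have hi : Integrable (fun y : E3 => kerR R ‖y‖) volume := by
    rw [integrable_fun_norm_addHaar volume (f := kerR R), integrableOn_congr_fun key measurableSet_Ioi]
    apply Integrable.integrableOn
    rw [integrable_indicator_iff measurableSet_Ioc]
    simp
  rw [← ofReal_integral_eq_lintegral_ofReal hi (Filter.Eventually.of_forall fun y => kerR_nonneg _ _)]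
  apply ENNReal.ofReal_le_ofReal
  rw [integral_fun_norm_addHaar volume (kerR R), setIntegral_congr_fun measurableSet_Ioi key,
    setIntegral_indicator measurableSet_Ioc]
  have : Ioi (0:ℝ) ∩ Ioc 0 R = Ioc 0 R := by
    ext z; simp
  rw [this]
  simp [hR]
  rw [mul_assoc]

def gN (n s : ℝ) : ℝ := if s ≤ 1 then s else s ^ n

def HN (n s : ℝ) : ℝ := if s ≤ 1 then s ^ (-(1/2) : ℝ) else s ^ (-(n/2))

lemma HN_nonneg (n s : ℝ) (hs : 0 ≤ s) : 0 ≤ HN n s := by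
  unfold HN; split_ifs <;> positivity

lemma HN_meas (n : ℝ) : Measurable (HN n) := by
  unfold HN
  exact Measurable.ite measurableSet_Iic (by fun_prop) (by fun_prop)

lemma HN_anti (n s t : ℝ) (hn : 7 ≤ n) (hs : 0 < s) (hst : s ≤ t) : HN n t ≤ HN n s := by
  unfold HN
  split_ifs with h1 h2 h2
  · exact Real.rpow_le_rpow_of_nonpos hs hst (by norm_num)
  · linarith
  · push Not at h1
    calc t ^ (-(n/2)) ≤ 1 := Real.rpow_le_one_of_one_le_of_nonpos h1.le (by linarith)
      _ ≤ _ := Real.one_le_rpow_of_pos_of_le_one_of_nonpos hs h2 (by norm_num)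
  · exact Real.rpow_le_rpow_of_nonpos hs hst (by linarith)

lemma HN_integrable (n : ℝ) (hn : 7 ≤ n) : Integrable (fun v : E3 => HN n ‖v‖) volume := by
  rw [integrable_fun_norm_addHaar volume (f := HN n)]
  have hu : Ioi (0:ℝ) = Ioc 0 1 ∪ Ioi 1 := by simp
  rw [hu]
  apply IntegrableOn.union
  · have h : IntegrableOn (fun x : ℝ => x ^ (3/2 : ℝ)) (Ioc 0 1) :=
      (intervalIntegrable_iff_integrableOn_Ioc_of_le zero_le_one).1
        (intervalIntegral.intervalIntegrable_rpow' (by norm_num))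
    refine h.congr_fun ?_ measurableSet_Ioc
    intro y hy
    simp [HN, hy.2]
    rw [← Real.rpow_natCast, ← Real.rpow_add hy.1]
    norm_num
  · have h : IntegrableOn (fun x : ℝ => x ^ (2 - n/2 : ℝ)) (Ioi 1) :=
      integrableOn_Ioi_rpow_of_lt (by linarith) one_pos
    refine h.congr_fun ?_ measurableSet_Ioi
    intro y hy
    have hy' : 1 < y := hy
    simp [HN, not_le.2 hy']
    rw [← Real.rpow_natCast, ← Real.rpow_add (by linarith)]
    norm_num
    rfl

lemma HN_scale (n : ℝ) (hn : 7 ≤ n) (W : ℝ) (hW : 0 < W) :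
    ∫⁻ v : E3, ENNReal.ofReal (HN n ((1 + ‖v‖) / W)) ≤
      ENNReal.ofReal (W ^ 3 * ∫ v : E3, HN n ‖v‖) := by
  have hi := HN_integrable n hn
  have hi2 := (integrable_comp_smul_iff volume (fun v : E3 => HN n ‖v‖) (R := W⁻¹) (by positivity)).2 hi
  have he := Measure.integral_comp_smul volume (fun v : E3 => HN n ‖v‖) W⁻¹
  have hE : W ^ 3 * ∫ v : E3, HN n ‖v‖ = ∫ v : E3, HN n ‖W⁻¹ • v‖ := by
    rw [he]
    simp [abs_of_pos hW]
  rw [hE, ofReal_integral_eq_lintegral_ofReal hi2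
    (Filter.Eventually.of_forall fun y => HN_nonneg _ _ (norm_nonneg _))]
  apply lintegral_mono_ae
  have : ∀ᵐ v : E3, v ≠ 0 := by
    simp [ae_iff]
  filter_upwards [this] with v hv
  apply ENNReal.ofReal_le_ofReal
  apply HN_anti n _ _ hn
  · have : 0 < ‖v‖ := norm_pos_iff.2 hv
    rw [norm_smul, norm_inv, Real.norm_of_nonneg hW.le]; positivity
  · rw [norm_smul, norm_inv, Real.norm_of_nonneg hW.le, div_eq_inv_mul]
    gcongr
    linarith

lemma ptwise (n W w r : ℝ) (hW : 0 < W) (hw : 0 < w) (hr : 0 < r)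
    (h : W ^ (-(4/3) : ℝ) * HN n (w / W) < r) :
    (r ^ 2)⁻¹ ≤ W ^ (8/3 : ℝ) * (w / W) + W ^ (8/3 : ℝ) * (w / W) ^ n := by
  have hs : 0 < w / W := by positivity
  set s := w / W
  have h1 : 0 < W ^ (-(4/3) : ℝ) * HN n s := by
    have : 0 < HN n s := by unfold HN; split_ifs <;> positivity
    positivity
  have h2 : (r ^ 2)⁻¹ ≤ ((W ^ (-(4/3) : ℝ) * HN n s) ^ 2)⁻¹ := by gcongr
  have h3 : ((W ^ (-(4/3) : ℝ) * HN n s) ^ 2)⁻¹ = W ^ (8/3 : ℝ) * gN n s := by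
    have a : ((W ^ (-(4/3) : ℝ)) ^ 2)⁻¹ = W ^ (8/3 : ℝ) := by
      rw [← Real.rpow_natCast, ← Real.rpow_mul hW.le, ← Real.rpow_neg hW.le]
      norm_num
    have b : ((HN n s) ^ 2)⁻¹ = gN n s := by
      unfold HN gN
      split_ifs
      · rw [← Real.rpow_natCast, ← Real.rpow_mul hs.le, ← Real.rpow_neg hs.le]
        norm_num
      · rw [← Real.rpow_natCast, ← Real.rpow_mul hs.le, ← Real.rpow_neg hs.le]
        congr 1
        push_cast; ring
    rw [mul_pow, mul_inv, a, b]
  rw [h3] at h2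
  have h4 : gN n s ≤ s + s ^ n := by
    have := Real.rpow_pos_of_pos hs n
    unfold gN; split_ifs <;> linarith
  calc _ ≤ _ := h2
    _ ≤ W ^ (8/3 : ℝ) * (s + s ^ n) := by gcongr
    _ = _ := by ring

lemma kerR_meas (n W : ℝ) (x : E3) : Measurable (fun p : E3 × E3 =>
    kerR (W ^ (-(4/3) : ℝ) * HN n ((1 + ‖p.2‖) / W)) ‖x - p.1‖) := by
  unfold kerR
  simp only [indicator, mem_Iic]
  have := HN_meas n
  apply Measurable.ite
  · apply measurableSet_le <;> fun_prop
  · fun_prop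
  · fun_prop

lemma core (n D c I W M : ℝ) (hn : 7 ≤ n) (hD : 0 < D) (hc : 0 ≤ c)
    (hcR : ∀ R : ℝ, 0 ≤ R → ∫⁻ y : E3, ENNReal.ofReal (kerR R ‖y‖) ≤ ENNReal.ofReal (c * R))
    (hI : I = ∫ v : E3, HN n ‖v‖) (hW : 0 < W) (hWM : M ≤ W ^ (n - 1))
    (f : E3 → E3 → ℝ) (hf : Measurable (fun p : E3 × E3 => f p.1 p.2)) (hf0 : ∀ x v, 0 ≤ f x v)
    (hfD : ∀ᵐ p : E3 × E3, f p.1 p.2 ≤ D)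
    (h1 : Integrable (fun p : E3 × E3 => (1 + ‖p.2‖) * f p.1 p.2) volume)
    (h1D : (∫ p : E3 × E3, (1 + ‖p.2‖) * f p.1 p.2) ≤ D)
    (h2 : Integrable (fun p : E3 × E3 => (1 + ‖p.2‖) ^ n * f p.1 p.2) volume)
    (hM : (∫ p : E3 × E3, (1 + ‖p.2‖) ^ n * f p.1 p.2) = M) (x : E3) :
    ‖∫ y, ((∫ v, f y v) / ‖x - y‖ ^ 3) • (y - x)‖ ≤ (D + 1 + D * c * I) * W ^ (5/3 : ℝ) := by
  have hI0 : 0 ≤ I := by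
    rw [hI]; exact integral_nonneg fun v => HN_nonneg _ _ (norm_nonneg _)
  have hM0 : 0 ≤ M := by
    rw [← hM]
    exact integral_nonneg fun p => mul_nonneg (by positivity) (hf0 _ _)
  have hRn : ∀ v : E3, 0 ≤ W ^ (-(4/3) : ℝ) * HN n ((1 + ‖v‖) / W) := fun v =>
    mul_nonneg (by positivity) (HN_nonneg _ _ (by positivity))
  set K := W ^ (5/3 : ℝ) with hK
  have hK0 : 0 < K := by positivity
  set L := W ^ (8/3 - n : ℝ) with hL
  have hL0 : 0 < L := by positivity
  rw [← ENNReal.ofReal_le_ofReal_iff (by positivity), ofReal_norm]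
  have s1 : ∀ y : E3, ‖((∫ v, f y v) / ‖x - y‖ ^ 3) • (y - x)‖ₑ ≤
      ∫⁻ v, ENNReal.ofReal (f y v * (‖x - y‖ ^ 2)⁻¹) := by
    intro y
    have e1 : ((∫ v, f y v) / ‖x - y‖ ^ 3) • (y - x) =
        (∫ v, f y v * (‖x - y‖ ^ 2)⁻¹) • ((‖x - y‖)⁻¹ • (y - x)) := by
      rw [integral_mul_const, smul_smul]
      congr 1
      rw [div_eq_mul_inv, mul_assoc, ← mul_inv, ← pow_succ]
    rw [e1, enorm_smul]
    have e2 : ‖((‖x - y‖)⁻¹ • (y - x))‖ₑ ≤ 1 := by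
      rw [← ofReal_norm, ENNReal.ofReal_le_one, norm_smul, norm_inv, norm_norm, norm_sub_rev y x]
      exact inv_mul_le_one
    calc _ ≤ ‖∫ v, f y v * (‖x - y‖ ^ 2)⁻¹‖ₑ * 1 := by gcongr
      _ = ‖∫ v, f y v * (‖x - y‖ ^ 2)⁻¹‖ₑ := mul_one _
      _ ≤ _ := enorm_integral_le_lintegral_enorm _
      _ = _ := by
        congr 1; ext v
        rw [Real.enorm_of_nonneg (mul_nonneg (hf0 _ _) (by positivity))]
  have mF : Measurable (fun p : E3 × E3 => ENNReal.ofReal (f p.1 p.2 * (‖x - p.1‖ ^ 2)⁻¹)) := by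
    fun_prop
  have s2 : ‖∫ y, ((∫ v, f y v) / ‖x - y‖ ^ 3) • (y - x)‖ₑ ≤
      ∫⁻ p : E3 × E3, ENNReal.ofReal (f p.1 p.2 * (‖x - p.1‖ ^ 2)⁻¹) := by
    rw [Measure.volume_eq_prod, lintegral_prod _ mF.aemeasurable]
    exact (enorm_integral_le_lintegral_enorm _).trans (lintegral_mono s1)
  have mk := kerR_meas n W x
  have s3 : ∫⁻ p : E3 × E3, ENNReal.ofReal (f p.1 p.2 * (‖x - p.1‖ ^ 2)⁻¹) ≤
      ∫⁻ p : E3 × E3, (ENNReal.ofReal (K * ((1 + ‖p.2‖) * f p.1 p.2)) +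
        (ENNReal.ofReal (L * ((1 + ‖p.2‖) ^ n * f p.1 p.2)) +
        ENNReal.ofReal D * ENNReal.ofReal
          (kerR (W ^ (-(4/3) : ℝ) * HN n ((1 + ‖p.2‖) / W)) ‖x - p.1‖))) := by
    apply lintegral_mono_ae
    filter_upwards [hfD] with p hp
    have f0 := hf0 p.1 p.2
    have w0 : 0 < 1 + ‖p.2‖ := by positivity
    have k0 := kerR_nonneg (W ^ (-(4/3) : ℝ) * HN n ((1 + ‖p.2‖) / W)) ‖x - p.1‖
    rw [← ENNReal.ofReal_mul hD.le, ← ENNReal.ofReal_add (by positivity) (by positivity),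
      ← ENNReal.ofReal_add (by positivity) (by positivity)]
    apply ENNReal.ofReal_le_ofReal
    by_cases hr : ‖x - p.1‖ ≤ W ^ (-(4/3) : ℝ) * HN n ((1 + ‖p.2‖) / W)
    · have : kerR (W ^ (-(4/3) : ℝ) * HN n ((1 + ‖p.2‖) / W)) ‖x - p.1‖ = (‖x - p.1‖ ^ 2)⁻¹ := by
        unfold kerR
        rw [indicator_of_mem (by exact hr)]
      rw [this]
      have a1 : f p.1 p.2 * (‖x - p.1‖ ^ 2)⁻¹ ≤ D * (‖x - p.1‖ ^ 2)⁻¹ := by gcongr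
      have a2 : 0 ≤ K * ((1 + ‖p.2‖) * f p.1 p.2) := by positivity
      have a3 : 0 ≤ L * ((1 + ‖p.2‖) ^ n * f p.1 p.2) := by positivity
      linarith
    · push Not at hr
      have hh := ptwise n W (1 + ‖p.2‖) ‖x - p.1‖ hW w0 ((hRn p.2).trans_lt hr) hr
      have e1 : W ^ (8/3 : ℝ) * ((1 + ‖p.2‖) / W) = K * (1 + ‖p.2‖) := by
        have : W ^ (8/3 : ℝ) = K * W := by
          rw [hK, ← Real.rpow_add_one hW.ne']; norm_num
        rw [this]; field_simp
      have e2 : W ^ (8/3 : ℝ) * ((1 + ‖p.2‖) / W) ^ n = L * (1 + ‖p.2‖) ^ n := by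
        rw [hL, Real.rpow_sub hW, Real.div_rpow w0.le hW.le]
        ring
      rw [e1, e2] at hh
      have := mul_le_mul_of_nonneg_left hh f0
      have a3 := mul_nonneg hD.le k0
      linarith
  have m1 : Measurable (fun p : E3 × E3 => ENNReal.ofReal (K * ((1 + ‖p.2‖) * f p.1 p.2))) := by
    fun_prop
  have m2 : Measurable (fun p : E3 × E3 => ENNReal.ofReal (L * ((1 + ‖p.2‖) ^ n * f p.1 p.2))) := by
    fun_prop
  have t1 : ∫⁻ p : E3 × E3, ENNReal.ofReal (K * ((1 + ‖p.2‖) * f p.1 p.2)) ≤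
      ENNReal.ofReal (K * D) := by
    rw [← ofReal_integral_eq_lintegral_ofReal (h1.const_mul K)
      (Filter.Eventually.of_forall fun p => mul_nonneg hK0.le
        (mul_nonneg (by positivity) (hf0 _ _))), integral_const_mul]
    gcongr
  have t2 : ∫⁻ p : E3 × E3, ENNReal.ofReal (L * ((1 + ‖p.2‖) ^ n * f p.1 p.2)) ≤
      ENNReal.ofReal K := by
    rw [← ofReal_integral_eq_lintegral_ofReal (h2.const_mul L)
      (Filter.Eventually.of_forall fun p => mul_nonneg hL0.le
        (mul_nonneg (by positivity) (hf0 _ _))), integral_const_mul, hM]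
    apply ENNReal.ofReal_le_ofReal
    calc L * M ≤ L * W ^ (n - 1) := by gcongr
      _ = K := by
        rw [hL, hK, ← Real.rpow_add hW]; congr 1; ring
  have t3 : ∫⁻ p : E3 × E3, ENNReal.ofReal
      (kerR (W ^ (-(4/3) : ℝ) * HN n ((1 + ‖p.2‖) / W)) ‖x - p.1‖) ≤
      ENNReal.ofReal (c * I * K) := by
    rw [Measure.volume_eq_prod, lintegral_prod_symm _ mk.ennreal_ofReal.aemeasurable]
    calc _ ≤ ∫⁻ v : E3, ENNReal.ofReal (c * W ^ (-(4/3) : ℝ)) *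
          ENNReal.ofReal (HN n ((1 + ‖v‖) / W)) := by
          apply lintegral_mono
          intro v
          dsimp only
          rw [lintegral_sub_left_eq_self (fun z : E3 => ENNReal.ofReal
            (kerR (W ^ (-(4/3) : ℝ) * HN n ((1 + ‖v‖) / W)) ‖z‖)) x]
          refine (hcR _ (hRn v)).trans ?_
          rw [← ENNReal.ofReal_mul (by positivity), mul_assoc]
      _ = ENNReal.ofReal (c * W ^ (-(4/3) : ℝ)) *
          ∫⁻ v : E3, ENNReal.ofReal (HN n ((1 + ‖v‖) / W)) := by
          rw [lintegral_const_mul' _ _ ENNReal.ofReal_ne_top]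
      _ ≤ ENNReal.ofReal (c * W ^ (-(4/3) : ℝ)) * ENNReal.ofReal (W ^ 3 * I) := by
          rw [hI]
          gcongr
          exact HN_scale n hn W hW
      _ = _ := by
          rw [← ENNReal.ofReal_mul (by positivity)]
          congr 1
          have : W ^ (-(4/3) : ℝ) * W ^ 3 = K := by
            rw [hK, ← Real.rpow_natCast, ← Real.rpow_add hW]; norm_num
          rw [← this]; ring
  refine s2.trans (s3.trans ?_)
  rw [lintegral_add_left m1, lintegral_add_left m2, lintegral_const_mul' _ _ ENNReal.ofReal_ne_top]
  calc _ ≤ ENNReal.ofReal (K * D) + (ENNReal.ofReal K +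
        ENNReal.ofReal D * ENNReal.ofReal (c * I * K)) := by gcongr
    _ = _ := by
      rw [← ENNReal.ofReal_mul hD.le, ← ENNReal.ofReal_add (by positivity) (by positivity),
        ← ENNReal.ofReal_add (by positivity) (by positivity)]
      congr 1; ring

/-- The electric field of a particle distribution `f` is bounded by
`C (1 + M^{(5+δ)/((3-δ)(n-1))})` where `M` is the `n`-th velocity moment, provided
`f ≤ D` a.e. and the first velocity moment is at most `D`. -/
theorem field_moment_bound (δ n D : ℝ)
    (hδ : δ ∈ Set.Ioo (0 : ℝ) (((10 : ℝ) ^ (10 : ℕ))⁻¹)) (hn : 7 ≤ n) (hD : 0 < D) :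
    ∃ C : ℝ, ∀ f : E3 → E3 → ℝ,
      Measurable (fun p : E3 × E3 => f p.1 p.2) → (∀ x v, 0 ≤ f x v) →
      (∀ᵐ p : E3 × E3, f p.1 p.2 ≤ D) →
      Integrable (fun p : E3 × E3 => (1 + ‖p.2‖) * f p.1 p.2) volume →
      (∫ p : E3 × E3, (1 + ‖p.2‖) * f p.1 p.2) ≤ D →
      Integrable (fun p : E3 × E3 => (1 + ‖p.2‖) ^ n * f p.1 p.2) volume →
      ∀ x : E3,
        ‖∫ y, ((∫ v, f y v) / ‖x - y‖ ^ 3) • (y - x)‖ ≤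
          C * (1 + (∫ p : E3 × E3, (1 + ‖p.2‖) ^ n * f p.1 p.2) ^
            ((5 + δ) / ((3 - δ) * (n - 1)))) := by
  obtain ⟨c, hc, hcR⟩ := kerR_int
  refine ⟨D + 1 + D * c * ∫ v : E3, HN n ‖v‖, ?_⟩
  intro f hf hf0 hfD h1 h1D h2 x
  set M := ∫ p : E3 × E3, (1 + ‖p.2‖) ^ n * f p.1 p.2 with hM
  have hI0 : 0 ≤ ∫ v : E3, HN n ‖v‖ := integral_nonneg fun v => HN_nonneg _ _ (norm_nonneg _)
  have hM0 : 0 ≤ M := integral_nonneg fun p => mul_nonneg (by positivity) (hf0 _ _)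
  have hm1 : 1 ≤ max 1 M := le_max_left _ _
  have hm0 : 0 < max 1 M := by linarith
  have hn1 : 0 < n - 1 := by linarith
  have hd0 : 0 < δ := hδ.1
  have hd1 : δ < 1 := hδ.2.trans (by norm_num)
  refine (core n D c _ ((max 1 M) ^ (1 / (n - 1))) M hn hD hc hcR rfl (by positivity) ?_
    f hf hf0 hfD h1 h1D h2 hM.symm x).trans ?_
  · rw [← Real.rpow_mul hm0.le, one_div, inv_mul_cancel₀ hn1.ne', Real.rpow_one]
    exact le_max_right _ _
  · gcongr
    rw [← Real.rpow_mul hm0.le]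
    have h3d : 0 < 3 - δ := by linarith
    have ha : 1 / (n - 1) * (5 / 3) ≤ (5 + δ) / ((3 - δ) * (n - 1)) := by
      rw [div_mul_div_comm, div_le_div_iff₀ (by positivity) (by positivity)]
      have := mul_pos hd0 hn1
      nlinarith
    refine (Real.rpow_le_rpow_of_exponent_le hm1 ha).trans ?_
    have hp : 0 ≤ M ^ ((5 + δ) / ((3 - δ) * (n - 1))) := by positivity
    rcases le_total M 1 with h | h
    · rw [max_eq_left h, Real.one_rpow]; linarith
    · rw [max_eq_right h]; linarith
end
end
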